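/- Fix positive integers r and s and set N := rs. Let 𝕂 := ℚ(u), t := u², k := u^{r+1}, and let Λ := 𝕂[p₁, p₂, p₃, …] be the polynomial ring in countably many variables, graded by deg pₙ = n. For a partition λ set p_λ := Π p_{λᵢ}, z_λ := Π_{i≥1} i^{m_i(λ)} m_i(λ)!, and z^{±}_λ(t) := Π_{i≥1} m_i(λ)! · (± i·(1 + t^{−i})/(1 − t^{−i}))^{m_i(λ)}, where m_i(λ) is the multiplicity of i in λ. Define for n ≥ 1: T_{−n} := k·t^{(n−1)/2}·Σ_{λ⊢n} p_λ/z^{+}_λ(t) + k^{−1}·t^{−(n−1)/2}·Σ_{λ⊢n} p_λ/z^{−}_λ(t) (note t^{±(n−1)/2} = u^{±(n−1)} ∈ 𝕂), and for a partition μ = (μ₁, …, μ_ℓ) set T_{−μ} := T_{−μ₁} ⋯ T_{−μ_ℓ}. Define e_n := Σ_{λ⊢n} (−1)^{n−ℓ(λ)} p_λ / z_λ (the n-th elementary symmetric function expressed in power sums). Then: (1) the family {T_{−μ} : μ ⊢ N} is a 𝕂-basis of the homogeneous component of Λ of degree N; and (2) writing e_r^{ s} = Σ_{μ⊢N} c_μ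 · T_{−μ} with c_μ ∈ 𝕂, the coefficient of T_{−(1^N)} is c_{(1^N)} = Π_{i=1}^{r} ( t^i / (1 − t^i)² )^{s}. -/

import Mathlib

noncomputable section

/-- `𝕂 := ℚ(u)`, the field of rational functions in one variable `u` over `ℚ`. -/
abbrev QtField := RatFunc ℚ

/-- The variable `u`, with `t = u²`. -/
def uVar : QtField := RatFunc.X

/-- `t := u²`. -/
def tVar : QtField := uVar ^ 2

/-- `Λ := 𝕂[p₁, p₂, p₃, …]`: the variable of index `i : ℕ` represents `p_{i+1}`, so that
`pₙ` is the variable of index `n − 1` and the grading `deg pₙ = n` corresponds to the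
weight function `i ↦ i + 1`. -/
abbrev SymFuncAlg := MvPolynomial ℕ QtField

/-- The power sum `pₙ` (for `n ≥ 1`), i.e. the variable of index `n − 1`. -/
def pVar (n : ℕ) : SymFuncAlg := MvPolynomial.X (n - 1)

/-- `p_λ := Π_i p_{λᵢ}`. -/
def pPart {n : ℕ} (lam : Nat.Partition n) : SymFuncAlg :=
  (lam.parts.map pVar).prod

/-- `z_λ := Π_{i≥1} i^{m_i(λ)} m_i(λ)!` where `m_i(λ)` is the multiplicity of `i` in `λ`. -/
def zPart {n : ℕ} (lam : Nat.Partition n) : ℕ :=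
  lam.parts.prod * ∏ i ∈ lam.parts.toFinset, (lam.parts.count i).factorial

/-- `z^{±}_λ(t) := Π_{i≥1} m_i(λ)! · (± i·(1 + t^{−i})/(1 − t^{−i}))^{m_i(λ)}`;
the sign `± 1` is the parameter `e`. -/
def zSignPart (e : QtField) {n : ℕ} (lam : Nat.Partition n) : QtField :=
  ∏ i ∈ lam.parts.toFinset,
    ((lam.parts.count i).factorial : QtField) *
      (e * (i : QtField) * (1 + tVar ^ (-(i : ℤ))) / (1 - tVar ^ (-(i : ℤ))))
        ^ (lam.parts.count i)

/-- `T_{−n} := k·t^{(n−1)/2}·Σ_{λ⊢n} p_λ/z⁺_λ(t) + k⁻¹·t^{−(n−1)/2}·Σ_{λ⊢n} p_λ/z⁻_λ(t)`,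
with `k := u^{r+1}` and `t^{±(n−1)/2} = u^{±(n−1)}`. -/
def Tneg (r : ℕ) (n : ℕ) : SymFuncAlg :=
  MvPolynomial.C (uVar ^ (r + 1) * uVar ^ (n - 1)) *
      ∑ lam : Nat.Partition n, MvPolynomial.C (zSignPart 1 lam)⁻¹ * pPart lam
    + MvPolynomial.C ((uVar ^ (r + 1))⁻¹ * (uVar ^ (n - 1))⁻¹) *
      ∑ lam : Nat.Partition n, MvPolynomial.C (zSignPart (-1) lam)⁻¹ * pPart lam

/-- `T_{−μ} := T_{−μ₁} ⋯ T_{−μ_ℓ}`. -/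
def TnegPart (r : ℕ) {N : ℕ} (mu : Nat.Partition N) : SymFuncAlg :=
  (mu.parts.map (Tneg r)).prod

/-- `e_n := Σ_{λ⊢n} (−1)^{n−ℓ(λ)} p_λ / z_λ`, the `n`-th elementary symmetric function in
terms of power sums. -/
def elemSym (n : ℕ) : SymFuncAlg :=
  ∑ lam : Nat.Partition n,
    MvPolynomial.C ((-1 : QtField) ^ (n - Multiset.card lam.parts)
        * ((zPart lam : QtField))⁻¹) * pPart lam

/-- The partition `(1^N)` of `N`. -/
def onePow (N : ℕ) : Nat.Partition N :=
  Nat.Partition.ofSums N (Multiset.replicate N 1) (by simp)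

section helpers
open PowerSeries Finset
open scoped PowerSeries.WithPiTopology

set_option linter.unusedSectionVars false
set_option linter.unusedVariables false
set_option linter.unusedSimpArgs false

section A
variable {F : Type*} [Field F] [CharZero F]

def pexp (x : ℕ → F) : F⟦X⟧ := Nat.Partition.genFun (fun i c => x i ^ c / (c.factorial : F))

lemma coeff_pexp (x : ℕ → F) (n : ℕ) :
    (pexp x).coeff n = ∑ p : n.Partition, ∏ i ∈ p.parts.toFinset,
      (x i ^ (p.parts.count i) / ((p.parts.count i).factorial : F)) := by
  simp only [pexp, Nat.Partition.coeff_genFun, Finsupp.prod, Multiset.toFinsupp_support,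
    Multiset.toFinsupp_apply]

lemma pexp_factor [TopologicalSpace F] [DiscreteTopology F] (x : ℕ → F) (i : ℕ) :
    (1 + ∑' j, (x (i+1) ^ (j+1) / ((j+1).factorial : F)) • (X : F⟦X⟧) ^ ((i + 1) * (j + 1)))
     = expand (i+1) (Nat.succ_ne_zero i) (rescale (x (i+1)) (exp F)) := by
  have hs := Nat.Partition.summable_genFun_term (fun i c => x i ^ c / (c.factorial : F)) i
  ext n
  rw [map_add, hs.map_tsum _ (WithPiTopology.continuous_coeff _ _), coeff_expand]
  simp only [coeff_smul, coeff_X_pow, coeff_one, smul_eq_mul]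
  by_cases h : (i+1) ∣ n
  · obtain ⟨k, rfl⟩ := h
    rcases k with _ | k
    · simp
    · rw [tsum_eq_single k]
      · simp [coeff_rescale, coeff_exp, div_eq_mul_inv]
      · intro b hb
        rw [if_neg]
        · simp
        · intro h
          have := Nat.eq_of_mul_eq_mul_left (Nat.succ_pos i) h
          omega
  · rw [if_neg h, if_neg (by rintro rfl; simp at h)]
    rw [zero_add]
    convert tsum_zero with b
    rw [if_neg]
    · simp
    · rintro rfl; simp at h

lemma pexp_add (x y : ℕ → F) : pexp (x + y) = pexp x * pexp y := by
  let _ : TopologicalSpace F := ⊥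
  have : DiscreteTopology F := ⟨rfl⟩
  have h (x : ℕ → F) := Nat.Partition.hasProd_genFun (fun i c => x i ^ c / (c.factorial : F))
  simp only [pexp_factor] at h
  refine (h (x+y)).unique ?_
  convert (h x).mul (h y) using 2 with i
  · rw [← map_mul, exp_mul_exp_eq_exp_add]
    rfl
  · rfl
  · rfl

lemma constantCoeff_pexp (x : ℕ → F) : (pexp x).coeff 0 = 1 := by
  rw [coeff_pexp]
  simp

lemma pexp_zero : pexp (0 : ℕ → F) = 1 := by
  have h := pexp_add (0 : ℕ → F) 0
  have h0 : pexp (0 : ℕ → F) ≠ 0 := by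
    intro h; have := constantCoeff_pexp (0 : ℕ → F); rw [h] at this; simp at this
  rw [add_zero] at h
  exact (mul_eq_left₀ h0).mp h.symm

lemma pexp_mul_neg (x : ℕ → F) : pexp x * pexp (-x) = 1 := by
  rw [← pexp_add, add_neg_cancel, pexp_zero]

lemma pexp_rescale (c : F) (x : ℕ → F) : pexp (fun i => c ^ i * x i) = rescale c (pexp x) := by
  ext n
  rw [coeff_rescale, coeff_pexp, coeff_pexp, Finset.mul_sum]
  refine Finset.sum_congr rfl fun p _ => ?_
  have : c ^ n = ∏ i ∈ p.parts.toFinset, (c^i)^(p.parts.count i) := by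
    conv_lhs => rw [← p.parts_sum, Finset.sum_multiset_count]
    rw [← Finset.prod_pow_eq_pow_sum]
    refine Finset.prod_congr rfl fun i _ => ?_
    rw [← pow_mul, smul_eq_mul, mul_comm]
  rw [this, ← Finset.prod_mul_distrib]
  refine Finset.prod_congr rfl fun i _ => ?_
  rw [mul_pow]; ring

lemma part_lt {n : ℕ} (p : n.Partition) (hp : p ≠ Nat.Partition.indiscrete n) {i : ℕ}
    (hi : i ∈ p.parts) : i < n := by
  refine lt_of_le_of_ne (Nat.Partition.le_of_mem_parts hi) ?_
  rintro rfl
  apply hp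
  have hpos := p.parts_pos hi
  ext1
  rw [Nat.Partition.indiscrete_parts hpos.ne']
  obtain ⟨m, hm⟩ := Multiset.exists_cons_of_mem hi
  have hs := p.parts_sum
  rw [hm, Multiset.sum_cons] at hs
  have : m = 0 := by
    rw [Multiset.eq_zero_iff_forall_notMem]
    intro a ha
    have h1 : 0 < a := p.parts_pos (by rw [hm]; exact Multiset.mem_cons_of_mem ha)
    have h2 := Multiset.le_sum_of_mem ha
    omega
  rw [hm, this]; rfl

def prest (n : ℕ) (x : ℕ → F) : F := ∑ p ∈ (univ : Finset n.Partition).erase (Nat.Partition.indiscrete n),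
  ∏ i ∈ p.parts.toFinset,
      (x i ^ (p.parts.count i) / ((p.parts.count i).factorial : F))

lemma coeff_pexp_eq (x : ℕ → F) (n : ℕ) (hn : n ≠ 0) : (pexp x).coeff n = x n + prest n x := by
  rw [coeff_pexp, prest, ← Finset.add_sum_erase _ _ (Finset.mem_univ (Nat.Partition.indiscrete n))]
  congr 1
  rw [Nat.Partition.indiscrete_parts hn]
  simp

lemma prest_congr (x y : ℕ → F) (n : ℕ) (h : ∀ i < n, x i = y i) : prest n x = prest n y := by
  refine Finset.sum_congr rfl fun p hp => Finset.prod_congr rfl fun i hi => ?_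
  rw [h i (part_lt p (Finset.ne_of_mem_erase hp) (Multiset.mem_toFinset.mp hi))]

def plog (f : F⟦X⟧) (n : ℕ) : F :=
  f.coeff n - prest n (fun i => if _h : i < n then plog f i else 0)

lemma pexp_plog (f : F⟦X⟧) (hf : f.coeff 0 = 1) : pexp (plog f) = f := by
  ext n
  by_cases hn : n = 0
  · subst hn; rw [constantCoeff_pexp, hf]
  · rw [coeff_pexp_eq _ _ hn]
    conv_lhs => enter [1]; rw [plog]
    rw [prest_congr (fun i => if _h : i < n then plog f i else 0) (plog f)]
    · ring
    · intro i hi; simp [hi]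
end A

section B
variable {F : Type*} [Field F] [CharZero F]

lemma rescale_C' (a b : F) : rescale a (C b : F⟦X⟧) = C b := by
  ext n
  rw [coeff_rescale, coeff_C]
  split_ifs with h
  · simp [h]
  · simp

lemma coeff_zero_mul' (a b : F⟦X⟧) : (a * b).coeff 0 = a.coeff 0 * b.coeff 0 := by
  simp

def ffc (u : F) (r n : ℕ) : F :=
  ∏ m ∈ range n, u ^ (r + 1 + 2 * (m + 1)) / ((1 - (u^2)^(m+1)) * (1 - (u^2)^(r+m+1)))

def ggc (u : F) (k n : ℕ) : F :=
  if n ≤ k then ∏ m ∈ range n, (-u ^ (k + 2) / ((1 - (u^2)^(m+1)) * (1 - (u^2)^(k - m)))) else 0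

lemma eq1 (u : F) (hu : u ≠ 0) (ht : ∀ n : ℕ, n ≠ 0 → 1 - (u^2)^n ≠ 0) (r : ℕ) :
    C (u^r) * rescale (u^2) (PowerSeries.mk (ffc u r)) + C (u⁻¹^r) * rescale ((u^2)⁻¹) (PowerSeries.mk (ffc u r))
      = (C (u^r) + C (u⁻¹^r) + C u * X) * PowerSeries.mk (ffc u r) := by
  ext n
  rcases n with _ | n
  · simp only [add_mul, map_add, coeff_C_mul, coeff_rescale, coeff_mk, mul_assoc, coeff_zero_X_mul]
    ring
  · simp only [add_mul, map_add, coeff_C_mul, coeff_rescale, coeff_mk, mul_assoc, coeff_succ_X_mul]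
    have h1 := ht (n+1) (by omega)
    have h2 := ht (r+n+1) (by omega)
    have : ffc u r (n+1) = ffc u r n * (u ^ (r + 1 + 2 * (n + 1)) / ((1 - (u^2)^(n+1)) * (1 - (u^2)^(r+n+1)))) :=
      Finset.prod_range_succ _ _
    rw [this]
    generalize ffc u r n = a
    simp only [inv_pow]
    field_simp
    ring

lemma eq2 (u : F) (hu : u ≠ 0) (ht : ∀ n : ℕ, n ≠ 0 → 1 - (u^2)^n ≠ 0) (k : ℕ) :
    C (u⁻¹^(k+1)) * rescale (u^2) (PowerSeries.mk (ggc u k)) + C (u^(k+1)) * rescale ((u^2)⁻¹) (PowerSeries.mk (ggc u k))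
      = (C (u^(k+1)) + C (u⁻¹^(k+1)) + C u * X) * PowerSeries.mk (ggc u k) - C (u * ggc u k k) * X^(k+1) := by
  ext n
  rcases n with _ | n
  · simp only [add_mul, map_add, map_sub, coeff_C_mul, coeff_rescale, coeff_mk, mul_assoc, coeff_zero_X_mul,
      coeff_X_pow]
    rw [if_neg (by omega)]
    ring
  · simp only [add_mul, map_add, map_sub, coeff_C_mul, coeff_rescale, coeff_mk, mul_assoc,
      coeff_succ_X_mul, coeff_X_pow]
    rcases lt_trichotomy n k with h | h | h
    · have h1 := ht (n+1) (by omega)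
      have h2 := ht (k - n) (by omega)
      have : ggc u k (n+1) = ggc u k n * (-u ^ (k + 2) / ((1 - (u^2)^(n+1)) * (1 - (u^2)^(k - n)))) := by
        rw [ggc, ggc, if_pos (by omega), if_pos (by omega)]
        exact Finset.prod_range_succ _ _
      rw [this, if_neg (by omega)]
      generalize ggc u k n = a
      obtain ⟨d, rfl⟩ : ∃ d, k = n + d := ⟨k - n, by omega⟩
      rw [show n + d - n = d by omega] at *
      simp only [inv_pow]
      field_simp
      ring
    · subst h
      have : ggc u n (n+1) = 0 := if_neg (by omega)
      rw [this]; simp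
    · have h1 : ggc u k (n+1) = 0 := if_neg (by omega)
      have h2 : ggc u k (n) = 0 := if_neg (by omega)
      rw [h1, h2, if_neg (by omega)]; simp

lemma prodfin (u : F) (hu : u ≠ 0) (ht : ∀ n : ℕ, n ≠ 0 → 1 - (u^2)^n ≠ 0) (k : ℕ) :
    (-1)^(k+1) * (-(u^(k+2) * ggc u k k) / ((u^2)^(k+1) - 1)^2)
      = ∏ i ∈ Icc 1 (k+1), ((u^2)^i / (1 - (u^2)^i)^2) := by
  have hP : ∏ i ∈ Icc 1 (k+1), ((u^2)^i / (1 - (u^2)^i)^2)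
      = ∏ i ∈ range (k+1), ((u^2)^(i+1) / (1 - (u^2)^(i+1))^2) := by
    rw [Finset.range_eq_Ico, Finset.prod_Ico_add' (fun i => ((u^2)^i / (1 - (u^2)^i)^2)) 0 (k+1) 1]
    rfl
  have hpw : ∀ k : ℕ, ∏ i ∈ range (k+1), (u^2)^(i+1) = (u^(k+2))^(k+1) := by
    intro k
    induction k with
    | zero => simp
    | succ k ih => rw [Finset.prod_range_succ, ih]; ring
  have hrefl : ∏ m ∈ range k, (1 - (u^2)^(k-m)) = ∏ m ∈ range k, (1 - (u^2)^(m+1)) := by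
    rw [← Finset.prod_range_reflect]
    refine Finset.prod_congr rfl fun m hm => ?_
    have := Finset.mem_range.mp hm
    rw [show k - (k - 1 - m) = m + 1 by omega]
  have h0 : ∏ m ∈ range k, (1 - (u^2)^(m+1)) ≠ 0 :=
    Finset.prod_ne_zero_iff.mpr fun m _ => ht _ (by omega)
  have h1 := ht (k+1) (by omega)
  have h2 : (u^2)^(k+1) - 1 ≠ 0 := by
    rw [← neg_ne_zero, neg_sub]; exact h1
  rw [hP, Finset.prod_div_distrib, hpw, Finset.prod_pow, Finset.prod_range_succ (fun i => 1 - (u^2)^(i+1)),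
    ggc, if_pos le_rfl, Finset.prod_div_distrib, Finset.prod_mul_distrib, hrefl, Finset.prod_const,
    Finset.card_range]
  generalize ∏ m ∈ range k, (1 - (u^2)^(m+1)) = P at *
  rw [show ((u^2)^(k+1) - 1)^2 = (1 - (u^2)^(k+1))^2 by ring]
  generalize (1 - (u^2)^(k+1)) = Q at *
  generalize u^(k+2) = w
  rw [neg_pow w]
  have hs : ((-1:F)^k)*(-1)^k = 1 := by rw [← mul_pow]; simp
  field_simp
  linear_combination (w ^ (k+1)) * hs

lemma key (u : F) (hu : u ≠ 0) (ht : ∀ n : ℕ, n ≠ 0 → 1 - (u^2)^n ≠ 0) (k : ℕ) :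
    ∃ x : ℕ → F,
      (∀ n, n ≠ 0 → u^(k+1+n) * (pexp (fun i => (1 - ((u^2)⁻¹)^i) * x i)).coeff n
        + (u^(k+1+n))⁻¹ * (pexp (fun i => -((1 - ((u^2)⁻¹)^i) * x i))).coeff n
          = if n = 1 then 1 else 0) ∧
      (-1)^(k+1) * (pexp (fun i => - ((1 + ((u^2)⁻¹)^i) * x i))).coeff (k+1)
        = ∏ i ∈ Icc 1 (k+1), ((u^2)^i / (1 - (u^2)^i)^2) := by
  set f : F⟦X⟧ := PowerSeries.mk (ffc u (k+1)) with hf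
  have hf0 : f.coeff 0 = 1 := by simp [hf, ffc]
  set x := plog f with hx
  have hxf : pexp x = f := pexp_plog f hf0
  set g := pexp (-x) with hg
  have hfg : f * g = 1 := by rw [← hxf]; exact pexp_mul_neg x
  have hg0 : g.coeff 0 = 1 := constantCoeff_pexp _
  have r1 : ∀ a b : F, ∀ p : F⟦X⟧, rescale a (rescale b p) = rescale (b * a) p := fun a b p => by
    rw [rescale_rescale]
  have e1 := eq1 u hu ht (k+1)
  rw [← hf] at e1
  have hut : u^2 ≠ 0 := pow_ne_zero _ hu
  refine ⟨x, ?_, ?_⟩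
  · have hA : pexp (fun i => (1 - ((u^2)⁻¹)^i) * x i) = f * rescale ((u^2)⁻¹) g := by
      rw [← hxf, hg, ← pexp_rescale, ← pexp_add]
      congr 1; ext i; simp; ring
    have hB : pexp (fun i => -((1 - ((u^2)⁻¹)^i) * x i)) = g * rescale ((u^2)⁻¹) f := by
      rw [← hxf, hg, ← pexp_rescale, ← pexp_add]
      congr 1; ext i; simp; ring
    have e1' := congrArg (rescale u⁻¹) e1
    have hfg' := congrArg (rescale u⁻¹) hfg
    simp only [map_add, map_mul, r1, rescale_X, map_one, rescale_C'] at e1' hfg'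
    have tot : C (u^(k+1)) * rescale u (f * rescale ((u^2)⁻¹) g) +
        C (u⁻¹^(k+1)) * rescale u⁻¹ (g * rescale ((u^2)⁻¹) f) = C (u^(k+1)) + C (u⁻¹^(k+1)) + X := by
      simp only [map_mul, r1]
      rw [show (u^2)⁻¹ * u = u⁻¹ by field_simp]
      rw [show u^2 * u⁻¹ = u by field_simp] at e1'
      have hc : (C u : F⟦X⟧) * C u⁻¹ = 1 := by rw [← map_mul, mul_inv_cancel₀ hu, map_one]
      linear_combination (rescale u⁻¹ g) * e1' + (C (u^(k+1)) + C (u⁻¹^(k+1)) + X) * hfg' 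
        + X * (rescale u⁻¹ f * rescale u⁻¹ g) * hc
    intro n hn
    rw [hA, hB]
    have := congrArg (coeff n) tot
    simp only [map_add, coeff_C_mul, coeff_rescale, coeff_C, if_neg hn, coeff_X, zero_add] at this
    rw [← this, pow_add, mul_inv, inv_pow, inv_pow]
    ring
  · have hE : pexp (fun i => - ((1 + ((u^2)⁻¹)^i) * x i)) = g * rescale ((u^2)⁻¹) g := by
      rw [hg, ← pexp_rescale, ← pexp_add]
      congr 1; ext i; simp; ring
    rw [hE]
    set E := g * rescale ((u^2)⁻¹) g with hEd
    have hE0 : E.coeff 0 = 1 := by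
      rw [← hE]; exact constantCoeff_pexp _
    have e2 := eq2 u hu ht k
    set G : F⟦X⟧ := PowerSeries.mk (ggc u k) with hG
    have hG0 : G.coeff 0 = 1 := by simp [hG, ggc]
    set V := C ((u^2)^(k+1)) * f * rescale ((u^2)⁻¹) G - rescale ((u^2)⁻¹) f * G with hV
    have hV1 : rescale (u^2) V - V = C (u^(k+2) * ggc u k k) * X^(k+1) * f := by
      rw [hV]
      simp only [map_sub, map_mul, r1, rescale_C', inv_mul_cancel₀ hut, rescale_one, RingHom.id_apply]
      have hc : (C (u^(k+1)) : F⟦X⟧) * C (u⁻¹^(k+1)) = 1 := by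
        rw [← map_mul, ← mul_pow, mul_inv_cancel₀ hu, one_pow, map_one]
      have hc2 : (C ((u^2)^(k+1)) : F⟦X⟧) = C (u^(k+1)) * C (u^(k+1)) := by
        rw [← map_mul]; congr 1; ring
      have hc3 : (C (u^(k+2)) : F⟦X⟧) = C (u^(k+1)) * C u := by
        rw [← map_mul]; congr 1; ring
      rw [hc2, hc3]
      simp only [map_mul] at e2
      linear_combination C (u^(k+1)) * (G * e1 - f * e2) 
        + (f * rescale (u^2) G - rescale ((u^2)⁻¹) f * G) * hc
    have hVc : ∀ n, n ≤ k + 1 → ((u^2)^n - 1) * V.coeff n = if n = k+1 then u^(k+2) * ggc u k k else 0 := by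
      intro n hn
      have := congrArg (coeff n) hV1
      rw [map_sub, coeff_rescale, mul_assoc, coeff_C_mul, coeff_X_pow_mul'] at this
      rw [sub_mul, one_mul, this]
      split_ifs with h1 h2 h2
      · subst h2; rw [Nat.sub_self, hf0, mul_one]
      · omega
      · omega
      · simp
    have hV0 : V.coeff 0 = (u^2)^(k+1) - 1 := by
      rw [hV, map_sub, mul_assoc, coeff_C_mul, coeff_zero_mul', coeff_zero_mul', coeff_rescale,
        coeff_rescale, hf0, hG0]
      simp
    have hVE : V * E = C ((u^2)^(k+1)) * rescale ((u^2)⁻¹) (G * g) - G * g := by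
      have hfg' := congrArg (rescale ((u^2)⁻¹)) hfg
      simp only [map_mul, map_one] at hfg'
      rw [hV, hEd, map_mul]
      linear_combination (C ((u^2)^(k+1)) * rescale ((u^2)⁻¹) G * rescale ((u^2)⁻¹) g) * hfg
        - G * g * hfg'
    have hVE0 : (V * E).coeff (k+1) = 0 := by
      rw [hVE, map_sub, coeff_C_mul, coeff_rescale, ← mul_assoc, ← mul_pow, mul_inv_cancel₀ hut]
      simp
    have h1 := ht (k+1) (by omega)
    have h2 : (u^2)^(k+1) - 1 ≠ 0 := by
      rw [← neg_ne_zero, neg_sub]; exact h1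
    have hsum : (V * E).coeff (k+1) = V.coeff 0 * E.coeff (k+1) + V.coeff (k+1) * E.coeff 0 := by
      rw [coeff_mul, Finset.Nat.sum_antidiagonal_eq_sum_range_succ_mk, Finset.sum_range_succ,
        Finset.sum_range_succ', Finset.sum_eq_zero]
      · simp
      · intro i hi
        have hi := Finset.mem_range.mp hi
        have hv := hVc (i+1) (by omega)
        rw [if_neg (by omega)] at hv
        have h3 := ht (i+1) (by omega)
        have h4 : (u^2)^(i+1) - 1 ≠ 0 := by
          rw [← neg_ne_zero, neg_sub]; exact h3
        have := (mul_eq_zero.mp hv).resolve_left h4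
        simp only [this, zero_mul]
    rw [hVE0, hV0, hE0] at hsum
    have hvr := hVc (k+1) le_rfl
    rw [if_pos rfl] at hvr
    rw [← prodfin u hu ht k]
    congr 1
    rw [eq_div_iff (pow_ne_zero 2 h2)]
    linear_combination - hvr - ((u^2)^(k+1) - 1) * hsum
end B

section CC

lemma uVar_ne : uVar ≠ 0 := RatFunc.X_ne_zero

lemma ht_ne (n : ℕ) (hn : n ≠ 0) : 1 - (uVar^2)^n ≠ 0 := by
  intro h
  have h1 : uVar ^ (2*n) = 1 := by rw [pow_mul]; exact (sub_eq_zero.mp h).symm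
  rw [uVar, ← RatFunc.algebraMap_X, ← map_pow, ← map_one (algebraMap (Polynomial ℚ) (RatFunc ℚ))] at h1
  have h2 := RatFunc.algebraMap_injective ℚ h1
  have h3 := congrArg Polynomial.natDegree h2
  simp at h3
  exact hn h3

lemma ht_inv (n : ℕ) (hn : n ≠ 0) : 1 - ((uVar^2)⁻¹)^n ≠ 0 := by
  have h := ht_ne n hn
  have hu := uVar_ne
  intro h1
  apply h
  rw [inv_pow, sub_eq_zero] at h1
  rw [eq_comm, inv_eq_one] at h1
  rw [h1, sub_self]

lemma ht_plus (n : ℕ) (hn : n ≠ 0) : 1 + ((uVar^2)⁻¹)^n ≠ 0 := by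
  have h := ht_inv (n+n) (by omega)
  intro h1
  apply h
  rw [pow_add]
  linear_combination (1 - ((uVar^2)⁻¹)^n) * h1

lemma tpow (i : ℕ) : tVar ^ (-(i:ℤ)) = ((uVar^2)⁻¹)^i := by
  rw [tVar, zpow_neg, zpow_natCast, inv_pow]

lemma eval_pPart (y : ℕ → QtField) {n : ℕ} (lam : n.Partition) :
    MvPolynomial.eval (fun j => y (j+1)) (pPart lam)
      = ∏ i ∈ lam.parts.toFinset, y i ^ (lam.parts.count i) := by
  rw [pPart, map_multiset_prod, Multiset.map_map, Finset.prod_multiset_map_count]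
  refine Finset.prod_congr rfl fun i hi => ?_
  have := lam.parts_pos (Multiset.mem_toFinset.mp hi)
  simp only [Function.comp, pVar, MvPolynomial.eval_X]
  rw [Nat.sub_add_cancel this]

def yv (x : ℕ → QtField) (i : ℕ) : QtField := (i:QtField) * (1 + ((uVar^2)⁻¹)^i) * x i

lemma eval_sign (x : ℕ → QtField) (e : QtField) (he : e⁻¹ = e) (n : ℕ) :
    MvPolynomial.eval (fun j => yv x (j+1))
      (∑ lam : Nat.Partition n, MvPolynomial.C (zSignPart e lam)⁻¹ * pPart lam)
      = (pexp (fun i => e * ((1 - ((uVar^2)⁻¹)^i) * x i))).coeff n := by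
  rw [coeff_pexp, map_sum]
  refine Finset.sum_congr rfl fun lam _ => ?_
  rw [map_mul, MvPolynomial.eval_C, eval_pPart (yv x), zSignPart, ← Finset.prod_inv_distrib,
    ← Finset.prod_mul_distrib]
  refine Finset.prod_congr rfl fun i hi => ?_
  have hi : i ≠ 0 := (lam.parts_pos (Multiset.mem_toFinset.mp hi)).ne'
  have h1 := ht_inv i hi
  have h2 := ht_plus i hi
  have h3 : (i : QtField) ≠ 0 := Nat.cast_ne_zero.mpr hi
  rw [yv, tpow, mul_inv, ← inv_pow, mul_assoc, ← mul_pow, mul_comm]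
  rw [div_eq_mul_inv (_ ^ _)]
  congr 2
  generalize ((uVar^2)⁻¹)^i = w at *
  rw [inv_div, div_eq_mul_inv, mul_inv, mul_inv, he]
  field_simp

lemma eval_elem (x : ℕ → QtField) (n : ℕ) :
    MvPolynomial.eval (fun j => yv x (j+1))
      (elemSym n)
      = (-1)^n * (pexp (fun i => - ((1 + ((uVar^2)⁻¹)^i) * x i))).coeff n := by
  rw [coeff_pexp, elemSym, map_sum, Finset.mul_sum]
  refine Finset.sum_congr rfl fun lam _ => ?_
  rw [map_mul, MvPolynomial.eval_C, eval_pPart (yv x), zPart]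
  have hc : Multiset.card lam.parts ≤ n := by
    have := Multiset.card_nsmul_le_sum (s := lam.parts) (a := 1) (fun i hi => lam.parts_pos hi)
    rw [lam.parts_sum] at this
    simpa using this
  have h1 : (-1 : QtField)^(n - Multiset.card lam.parts)
      = (-1)^n * ∏ i ∈ lam.parts.toFinset, (-1)^(lam.parts.count i) := by
    rw [Finset.prod_pow_eq_pow_sum, Multiset.toFinset_sum_count_eq]
    obtain ⟨d, hd⟩ := Nat.exists_eq_add_of_le hc
    rw [show n - Multiset.card lam.parts = d by omega]
    have hp : (-1 : QtField)^n = (-1)^(Multiset.card lam.parts) * (-1)^d := by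
      rw [← pow_add]; exact congrArg _ hd
    rw [hp]
    have hs : ((-1:QtField)^(Multiset.card lam.parts))*(-1)^(Multiset.card lam.parts) = 1 := by
      rw [← mul_pow]; simp
    linear_combination -(-1)^d * hs
  rw [h1, Finset.prod_multiset_count]
  push_cast
  rw [← Finset.prod_mul_distrib, mul_assoc, mul_assoc, ← Finset.prod_inv_distrib,
    ← Finset.prod_mul_distrib, ← Finset.prod_mul_distrib]
  congr 1
  refine Finset.prod_congr rfl fun i hi => ?_
  have hi : i ≠ 0 := (lam.parts_pos (Multiset.mem_toFinset.mp hi)).ne'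
  have h3 : (i : QtField) ≠ 0 := Nat.cast_ne_zero.mpr hi
  rw [yv, mul_inv, ← inv_pow, div_eq_mul_inv, neg_eq_neg_one_mul ((1 + ((uVar^2)⁻¹)^i) * x i),
    mul_pow (-1), mul_pow ((i:QtField) * _), mul_pow (i:QtField), mul_pow (1 + _), inv_pow]
  have := pow_ne_zero (lam.parts.count i) h3
  field_simp

lemma part2 (r s : ℕ) (hr : 0 < r) (c : Nat.Partition (r * s) → QtField)
    (h : (elemSym r) ^ s = ∑ mu : Nat.Partition (r * s), c mu • TnegPart r mu) :
      c (onePow (r * s))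
        = ∏ i ∈ Finset.Icc 1 r, (tVar ^ i / (1 - tVar ^ i) ^ 2) ^ s := by
  obtain ⟨k, rfl⟩ : ∃ k, r = k + 1 := ⟨r - 1, by omega⟩
  obtain ⟨x, hx1, hx2⟩ := key uVar uVar_ne ht_ne k
  set φ := MvPolynomial.eval (fun j => yv x (j+1)) with hφ
  have hT : ∀ n, n ≠ 0 → φ (Tneg (k+1) n) = if n = 1 then 1 else 0 := by
    intro n hn
    rw [← hx1 n hn, Tneg, map_add, map_mul φ, map_mul φ, hφ, eval_sign x 1 (by simp),
      eval_sign x (-1) (by norm_num), MvPolynomial.eval_C, MvPolynomial.eval_C]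
    simp only [one_mul, neg_one_mul]
    rw [← mul_inv, ← pow_add, show k + 1 + 1 + (n-1) = k+1+n by omega]
  have hE := eval_elem x (k+1)
  rw [hx2, ← hφ] at hE
  have h' := congrArg φ h
  rw [map_pow, hE, map_sum, Finset.sum_eq_single (onePow ((k+1)*s))] at h'
  · rw [Finset.prod_pow]
    simp only [tVar]
    rw [h', MvPolynomial.smul_eq_C_mul, map_mul, MvPolynomial.eval_C, TnegPart, map_multiset_prod,
      Multiset.prod_eq_one, mul_one]
    intro y hy
    simp only [onePow, Nat.Partition.ofSums_parts, Multiset.mem_map, Multiset.mem_filter] at hy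
    obtain ⟨_, ⟨n, ⟨hn, _⟩, rfl⟩, rfl⟩ := hy
    rw [Multiset.eq_of_mem_replicate hn, hT 1 one_ne_zero, if_pos rfl]
  · intro mu _ hmu
    rw [MvPolynomial.smul_eq_C_mul, map_mul, TnegPart, map_multiset_prod, Multiset.prod_eq_zero,
      mul_zero]
    by_contra hcon
    apply hmu
    have hall : ∀ n ∈ mu.parts, n = 1 := by
      intro n hn
      by_contra hn1
      apply hcon
      rw [Multiset.map_map, Multiset.mem_map]
      refine ⟨n, hn, ?_⟩
      simp only [Function.comp]
      rw [hT n (mu.parts_pos hn).ne', if_neg hn1]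
    have hrep := Multiset.eq_replicate_card.mpr hall
    have hcard : Multiset.card mu.parts = (k+1)*s := by
      have := mu.parts_sum
      rw [hrep] at this
      simpa using this
    ext1
    rw [hrep, hcard, onePow, Nat.Partition.ofSums_parts, Multiset.filter_eq_self.mpr]
    intro a ha
    rw [Multiset.eq_of_mem_replicate ha]; exact one_ne_zero
  · intro h; exact absurd (Finset.mem_univ _) h
end CC
end helpers

section DD
open MvPolynomial

abbrev wt : ℕ → ℕ := fun i => i + 1

lemma pVar_hom (n : ℕ) (hn : n ≠ 0) : IsWeightedHomogeneous wt (pVar n) n := by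
  have := isWeightedHomogeneous_X QtField wt (n-1)
  rwa [show wt (n-1) = n by simp only [wt]; omega] at this

lemma mprod_hom (f : ℕ → SymFuncAlg) (m : Multiset ℕ)
    (h : ∀ i ∈ m, IsWeightedHomogeneous wt (f i) i) :
    IsWeightedHomogeneous wt (m.map f).prod m.sum := by
  induction m using Multiset.induction with
  | empty => simpa using isWeightedHomogeneous_one QtField wt
  | cons a m ih =>
    rw [Multiset.map_cons, Multiset.prod_cons, Multiset.sum_cons]
    exact (h a (Multiset.mem_cons_self a m)).mul (ih fun i hi => h i (Multiset.mem_cons_of_mem hi))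

lemma pPart_hom {n : ℕ} (lam : n.Partition) : IsWeightedHomogeneous wt (pPart lam) n := by
  have := mprod_hom pVar lam.parts (fun i hi => pVar_hom i (lam.parts_pos hi).ne')
  rwa [lam.parts_sum] at this

lemma Tneg_hom (r n : ℕ) : IsWeightedHomogeneous wt (Tneg r n) n := by
  refine IsWeightedHomogeneous.add ?_ ?_ <;>
  · refine IsWeightedHomogeneous.C_mul (IsWeightedHomogeneous.sum _ _ _ fun lam _ => ?_) _
    exact (pPart_hom lam).C_mul _

lemma TnegPart_hom (r : ℕ) {n : ℕ} (mu : n.Partition) : IsWeightedHomogeneous wt (TnegPart r mu) n := by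
  have := mprod_hom (Tneg r) mu.parts (fun i _ => Tneg_hom r i)
  rwa [mu.parts_sum] at this

lemma pVar_mem (r : ℕ) (S : Subalgebra QtField SymFuncAlg) (hS : ∀ n, n ≠ 0 → Tneg r n ∈ S) (n : ℕ) :
    n ≠ 0 → pVar n ∈ S := by
  induction n using Nat.strong_induction_on with
  | _ n ih =>
  intro hn
  have hC : ∀ a : QtField, (C a : SymFuncAlg) ∈ S := fun a => S.algebraMap_mem a
  have hsum : ∀ e : QtField, ∃ q ∈ S, ∑ lam : Nat.Partition n, C (zSignPart e lam)⁻¹ * pPart lam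
      = C (zSignPart e (Nat.Partition.indiscrete n))⁻¹ * pVar n + q := by
    intro e
    refine ⟨∑ lam ∈ (Finset.univ : Finset n.Partition).erase (Nat.Partition.indiscrete n),
      C (zSignPart e lam)⁻¹ * pPart lam, ?_, ?_⟩
    rotate_left
    · rw [← Finset.add_sum_erase _ _ (Finset.mem_univ (Nat.Partition.indiscrete n))]
      congr 2
      rw [pPart, Nat.Partition.indiscrete_parts hn]
      simp
    · refine Subalgebra.sum_mem _ fun lam hl => S.mul_mem (hC _) (S.multiset_prod_mem fun a ha => ?_)
      obtain ⟨i, hi, rfl⟩ := Multiset.mem_map.mp ha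
      exact ih i (part_lt lam (Finset.ne_of_mem_erase hl) hi) (lam.parts_pos hi).ne'
  have hz : ∀ e : QtField, zSignPart e (Nat.Partition.indiscrete n)
      = e * ((n : QtField) * (1 + ((uVar^2)⁻¹)^n) / (1 - ((uVar^2)⁻¹)^n)) := by
    intro e
    rw [zSignPart, Nat.Partition.indiscrete_parts hn]
    simp only [tpow, Multiset.toFinset_singleton, Finset.prod_singleton, Multiset.count_singleton_self,
      Nat.factorial_one, Nat.cast_one, one_mul, pow_one]
    ring
  obtain ⟨q1, hq1, e1⟩ := hsum 1
  obtain ⟨q2, hq2, e2⟩ := hsum (-1)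
  have hT := hS n hn
  rw [Tneg, e1, e2, hz, hz] at hT
  have hb : ((n : QtField) * (1 + ((uVar^2)⁻¹)^n) / (1 - ((uVar^2)⁻¹)^n)) ≠ 0 :=
    div_ne_zero (mul_ne_zero (Nat.cast_ne_zero.mpr hn) (ht_plus n hn)) (ht_inv n hn)
  generalize ((n : QtField) * (1 + ((uVar^2)⁻¹)^n) / (1 - ((uVar^2)⁻¹)^n)) = b at *
  have hu := uVar_ne
  rw [← mul_inv, ← pow_add, show r + 1 + (n-1) = r + n by omega] at hT
  have ha : uVar^(r+n) ≠ 0 := pow_ne_zero _ hu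
  have hd := ht_ne (r+n) (by omega)
  rw [← pow_mul, mul_comm 2, pow_mul] at hd
  generalize uVar^(r+n) = a at *
  have hcne : (a - a⁻¹) * b⁻¹ ≠ 0 := by
    refine mul_ne_zero ?_ (inv_ne_zero hb)
    intro h
    apply hd
    field_simp at h
    linear_combination -h
  have key2 : C ((a - a⁻¹) * b⁻¹) * pVar n ∈ S := by
    have := S.sub_mem hT (S.add_mem (S.mul_mem (hC a) hq1) (S.mul_mem (hC a⁻¹) hq2))
    convert this using 1
    simp only [one_mul, neg_one_mul, inv_neg, C_neg, C_mul, C_sub]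
    ring
  have := S.mul_mem (hC ((a - a⁻¹) * b⁻¹)⁻¹) key2
  rwa [← mul_assoc, ← C_mul, inv_mul_cancel₀ hcne, C_1, one_mul] at this

lemma Phi_surj (r : ℕ) : (aeval (fun j => Tneg r (j+1)) : SymFuncAlg →ₐ[QtField] SymFuncAlg).range = ⊤ := by
  rw [eq_top_iff, ← MvPolynomial.adjoin_range_X]
  refine Algebra.adjoin_le ?_
  rintro _ ⟨j, rfl⟩
  refine pVar_mem r _ (fun n hn => ?_) (j+1) (by omega)
  refine ⟨X (n-1), ?_⟩
  simp only [RingHom.coe_coe, aeval_X, AlgHom.toRingHom_eq_coe]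
  rw [Nat.sub_add_cancel (Nat.pos_of_ne_zero hn)]

lemma span_le (r N : ℕ) : weightedHomogeneousSubmodule QtField wt N ≤
    Submodule.span QtField (Set.range (fun mu : Nat.Partition N => TnegPart r mu)) := by
  intro f hf
  rw [mem_weightedHomogeneousSubmodule] at hf
  obtain ⟨g, rfl⟩ : f ∈ (aeval (fun j => Tneg r (j+1)) : SymFuncAlg →ₐ[QtField] SymFuncAlg).range := by
    rw [Phi_surj]; trivial
  simp only [AlgHom.toRingHom_eq_coe, RingHom.coe_coe] at *
  rw [← hf.weightedHomogeneousComponent_same]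
  conv in aeval _ _ => rw [g.as_sum, map_sum]
  rw [map_sum]
  refine Submodule.sum_mem _ fun d _ => ?_
  have hmon : aeval (fun j => Tneg r (j+1)) (monomial d (g.coeff d))
      = (g.coeff d) • (((Finsupp.toMultiset d).map (· + 1)).map (Tneg r)).prod := by
    rw [aeval_monomial, Multiset.map_map, Finset.prod_multiset_map_count, Algebra.smul_def,
      Finsupp.toFinset_toMultiset, Finsupp.prod]
    simp only [Finsupp.count_toMultiset, Function.comp]
  rw [hmon, map_smul]
  refine Submodule.smul_mem _ _ ?_
  have hh := mprod_hom (Tneg r) ((Finsupp.toMultiset d).map (· + 1)) (fun i _ => Tneg_hom r i)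
  by_cases hN : ((Finsupp.toMultiset d).map (· + 1)).sum = N
  · rw [hN] at hh
    rw [hh.weightedHomogeneousComponent_same]
    refine Submodule.subset_span ⟨⟨(Finsupp.toMultiset d).map (· + 1), ?_, hN⟩, rfl⟩
    intro i hi
    obtain ⟨j, _, rfl⟩ := Multiset.mem_map.mp hi
    omega
  · rw [hh.weightedHomogeneousComponent_ne _ (Ne.symm hN)]
    exact Submodule.zero_mem _

lemma span_eq (r N : ℕ) : Submodule.span QtField (Set.range (fun mu : Nat.Partition N => TnegPart r mu))
      = weightedHomogeneousSubmodule QtField wt N := by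
  refine le_antisymm (Submodule.span_le.mpr ?_) (span_le r N)
  rintro _ ⟨mu, rfl⟩
  exact TnegPart_hom r mu

lemma pPart_mon {n : ℕ} (lam : n.Partition) :
    pPart lam = monomial (Multiset.toFinsupp (lam.parts.map (· - 1))) 1 := by
  rw [pPart]
  generalize lam.parts = m
  induction m using Multiset.induction with
  | empty => simp
  | cons a m ih =>
    rw [Multiset.map_cons, Multiset.prod_cons, ih, Multiset.map_cons, ← Multiset.singleton_add, map_add,
      Multiset.toFinsupp_singleton, pVar, X, monomial_mul, one_mul]

lemma pPart_indep (N : ℕ) : LinearIndependent QtField (fun mu : Nat.Partition N => pPart mu) := by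
  have := (MvPolynomial.basisMonomials ℕ QtField).linearIndependent.comp
    (fun lam : Nat.Partition N => Multiset.toFinsupp (lam.parts.map (· - 1))) ?_
  · have heq : (fun mu : Nat.Partition N => pPart mu) = (MvPolynomial.basisMonomials ℕ QtField) ∘
        (fun lam : Nat.Partition N => Multiset.toFinsupp (lam.parts.map (· - 1))) := by
      funext lam
      simp only [Function.comp, pPart_mon, coe_basisMonomials]
    rw [heq]
    exact this
  · intro a b hab
    have h1 := Multiset.toFinsupp.injective hab
    have h2 := congrArg (Multiset.map (· + 1)) h1
    have h3 : ∀ a : Nat.Partition N, Multiset.map (· + 1) (a.parts.map (· - 1)) = a.parts := by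
      intro a
      rw [Multiset.map_map]
      conv_rhs => rw [← Multiset.map_id a.parts]
      refine Multiset.map_congr rfl fun i hi => ?_
      have := a.parts_pos hi
      simp only [Function.comp, id]
      omega
    rw [h3, h3] at h2
    exact Nat.Partition.ext h2

lemma T_indep (r N : ℕ) : LinearIndependent QtField (fun mu : Nat.Partition N => TnegPart r mu) := by
  rw [linearIndependent_iff_card_le_finrank_span]
  have h1 := linearIndependent_iff_card_eq_finrank_span.mp (pPart_indep N)
  rw [h1]
  have : Module.Finite QtField (Submodule.span QtField (Set.range (fun mu : Nat.Partition N => TnegPart r mu))) :=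
    Module.Finite.span_of_finite _ (Set.finite_range _)
  refine Submodule.finrank_mono ?_
  rw [span_eq]
  refine Submodule.span_le.mpr ?_
  rintro _ ⟨mu, rfl⟩
  exact pPart_hom mu
end DD

/-- **q = 1 bosonization of the deformed Virasoro algebra.**  Fix positive integers
`r, s` and set `N := rs`.  Then (1) the family `{T_{−μ} : μ ⊢ N}` is a `𝕂`-basis of the
homogeneous component of `Λ` of degree `N` (for the grading `deg pₙ = n`), and
(2) writing `e_r^s = Σ_{μ⊢N} c_μ T_{−μ}`, the coefficient of `T_{−(1^N)}` is
`c_{(1^N)} = Π_{i=1}^{r} (t^i/(1 − t^i)²)^s`. -/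
theorem stmt_13 (r s : ℕ) (hr : 0 < r) (hs : 0 < s) :
    LinearIndependent QtField (fun mu : Nat.Partition (r * s) => TnegPart r mu) ∧
    Submodule.span QtField (Set.range (fun mu : Nat.Partition (r * s) => TnegPart r mu))
      = MvPolynomial.weightedHomogeneousSubmodule QtField (fun i : ℕ => i + 1) (r * s) ∧
    ∀ c : Nat.Partition (r * s) → QtField,
      (elemSym r) ^ s = ∑ mu : Nat.Partition (r * s), c mu • TnegPart r mu →
      c (onePow (r * s))
        = ∏ i ∈ Finset.Icc 1 r, (tVar ^ i / (1 - tVar ^ i) ^ 2) ^ s := by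
  exact ⟨T_indep r (r * s), span_eq r (r * s), fun c h => part2 r s hr c h⟩

end
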